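/- Fix T > 0 with nT ≥ 1, σ > 0, and let A ∈ ℝ^{m×n} be the heat measurement matrix. For a source vector f ∈ [0,1]^n with ‖f‖₁ = 1, let P_f denote the Gaussian distribution N(Af, σ² I_m) on ℝ^m. Then there is a universal constant C > 0 such that for all source vectors f_0, f_0' with ‖f_0‖₁ = ‖f_0'‖₁ = 1, the Kullback–Leibler divergence satisfies D(P_{f_0} ‖ P_{f_0'}) = ‖A f_0 − A f_0'‖₂² / (2σ²) ≤ C (m / (T³ σ²)) · EMD(f_0, f_0')². -/

import Mathlib

open scoped BigOperators
open MeasureTheory ProbabilityTheory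

/-- The Euclidean (`ℓ₂`) norm of a vector in `ℝ^m`. -/
noncomputable def l2norm {m : ℕ} (x : Fin m → ℝ) : ℝ := Real.sqrt (∑ i, (x i) ^ 2)

/-- The `ℓ₁` norm of a vector in `ℝ^n`. -/
noncomputable def l1norm {n : ℕ} (x : Fin n → ℝ) : ℝ := ∑ i, |x i|

/-- The Earth Mover Distance between two mass distributions `p q` on a finite
space with distance function `d`. -/
noncomputable def EMD {n : ℕ} (d : Fin n → Fin n → ℝ) (p q : Fin n → ℝ) : ℝ :=
  sInf {c : ℝ | ∃ F : Fin n → Fin n → ℝ,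
    (∀ i j, 0 ≤ F i j) ∧ (∀ i, ∑ j, F i j ≤ p i) ∧ (∀ j, ∑ i, F i j ≤ q j) ∧
    (∑ i, ∑ j, F i j = 1) ∧ c = ∑ i, ∑ j, F i j * d i j}

/-- The metric on the grid `{1/n, …, 1}`, indexed by `Fin n`: `d(i/n, j/n) = |i−j|/n`. -/
noncomputable def gridDist (n : ℕ) (i j : Fin n) : ℝ := |(i : ℝ) - (j : ℝ)| / n

/-- The one-dimensional heat kernel `g(x) = (1/√(4πT)) e^(−x²/(4T))` at diffusion time `T`. -/
noncomputable def heatKernel (T x : ℝ) : ℝ :=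
  (1 / Real.sqrt (4 * Real.pi * T)) * Real.exp (-x ^ 2 / (4 * T))

/-- The heat measurement matrix `A ∈ ℝ^{m×n}` with `A_{ij} = g(j/n − i/m)`. -/
noncomputable def heatMatrix (T : ℝ) (m n : ℕ) : Matrix (Fin m) (Fin n) ℝ :=
  Matrix.of fun i j => heatKernel T (((j : ℝ) + 1) / n - ((i : ℝ) + 1) / m)

/-- The Gaussian distribution `N(Af, σ² I_m)` on `ℝ^m` induced by the source vector `f`. -/
noncomputable def measDist (T σ : ℝ) (m n : ℕ) (f : Fin n → ℝ) : Measure (Fin m → ℝ) :=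
  Measure.pi fun i => gaussianReal ((heatMatrix T m n).mulVec f i) ⟨σ ^ 2, sq_nonneg σ⟩

/-- The Kullback–Leibler divergence `D(p‖q) = ∫ log (dp/dq) dp`. -/
noncomputable def KLdiv {m : ℕ} (p q : Measure (Fin m → ℝ)) : ℝ :=
  ∫ x, Real.log (p.rnDeriv q x).toReal ∂p

/-! The measurements are independent Gaussians of common variance `σ²`, so their divergence is the
sum of the one-dimensional ones. For the upper bound, every row of `A` samples the heat kernel on
`[-1, 1]`, where the kernel is Lipschitz with constant `g(0) / (2T) = 1 / (4 √π T^(3/2))`. By the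
easy half of Kantorovich duality, each coordinate of `A f₀ - A f₀'` is then at most that constant
times the Earth Mover Distance. -/

section ProductMeasure

open scoped ENNReal

variable {ι : Type*} [Fintype ι]

lemma indicator_univ_pi_prod {X : ι → Type*} {M : Type*} [CommMonoidWithZero M]
    (s : ∀ i, Set (X i)) (f : ∀ i, X i → M) (x : ∀ i, X i) :
    (Set.univ.pi s).indicator (fun x ↦ ∏ i, f i (x i)) x = ∏ i, (s i).indicator (f i) (x i) := by
  classical simp [Set.indicator, Finset.prod_ite_zero]

variable {X : ι → Type*} [∀ i, MeasurableSpace (X i)]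

lemma lintegral_pi_prod (μ : ∀ i, Measure (X i)) [∀ i, IsProbabilityMeasure (μ i)]
    {f : ∀ i, X i → ℝ≥0∞} (hf : ∀ i, Measurable (f i)) :
    ∫⁻ x, ∏ i, f i (x i) ∂Measure.pi μ = ∏ i, ∫⁻ x, f i x ∂μ i := by
  have indep : iIndepFun (fun i (x : ∀ i, X i) ↦ f i (x i)) (Measure.pi μ) :=
    iIndepFun_pi fun i ↦ (hf i).aemeasurable
  rw [lintegral_prod_eq_prod_lintegral_of_indepFun Finset.univ _ indep
    fun i ↦ (hf i).comp (measurable_pi_apply i)]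
  exact Finset.prod_congr rfl fun i _ ↦ (measurePreserving_eval μ i).lintegral_comp (hf i)

lemma pi_withDensity (μ : ∀ i, Measure (X i)) [∀ i, IsProbabilityMeasure (μ i)]
    {f : ∀ i, X i → ℝ≥0∞} (hf : ∀ i, Measurable (f i))
    [∀ i, SigmaFinite ((μ i).withDensity (f i))] :
    Measure.pi (fun i ↦ (μ i).withDensity (f i)) =
      (Measure.pi μ).withDensity (fun x ↦ ∏ i, f i (x i)) := by
  refine Measure.pi_eq fun s hs ↦ ?_
  rw [withDensity_apply _ (.univ_pi hs), ← lintegral_indicator (.univ_pi hs)]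
  simp_rw [indicator_univ_pi_prod]
  rw [lintegral_pi_prod μ fun i ↦ (hf i).indicator (hs i)]
  exact Finset.prod_congr rfl fun i _ ↦ by
    rw [lintegral_indicator (hs i), withDensity_apply _ (hs i)]

variable {μ ν : ∀ i, Measure (X i)} [∀ i, IsProbabilityMeasure (μ i)]
  [∀ i, IsProbabilityMeasure (ν i)]

lemma pi_eq_withDensity_prod_rnDeriv (hμν : ∀ i, μ i ≪ ν i) :
    Measure.pi μ = (Measure.pi ν).withDensity (fun x ↦ ∏ i, (μ i).rnDeriv (ν i) (x i)) := by
  have h i : (ν i).withDensity ((μ i).rnDeriv (ν i)) = μ i :=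
    Measure.withDensity_rnDeriv_eq _ _ (hμν i)
  have (i : ι) : SigmaFinite ((ν i).withDensity ((μ i).rnDeriv (ν i))) := by
    rw [h]; infer_instance
  rw [← pi_withDensity ν fun i ↦ Measure.measurable_rnDeriv (μ i) (ν i)]
  simp_rw [h]

lemma llr_pi (hμν : ∀ i, μ i ≪ ν i) :
    llr (Measure.pi μ) (Measure.pi ν) =ᵐ[Measure.pi μ] fun x ↦ ∑ i, llr (μ i) (ν i) (x i) := by
  have hprod := pi_eq_withDensity_prod_rnDeriv hμν
  have hac : Measure.pi μ ≪ Measure.pi ν := by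
    rw [hprod]; exact withDensity_absolutelyContinuous _ _
  have hderiv : (Measure.pi μ).rnDeriv (Measure.pi ν) =ᵐ[Measure.pi ν]
      fun x ↦ ∏ i, (μ i).rnDeriv (ν i) (x i) := by
    rw [hprod]; exact Measure.rnDeriv_withDensity _ (by fun_prop)
  have hpos : ∀ᵐ x ∂Measure.pi μ, ∀ i, 0 < ((μ i).rnDeriv (ν i) (x i)).toReal := by
    refine ae_all_iff.2 fun i ↦ (Measure.quasiMeasurePreserving_eval μ i).ae
      (p := fun y ↦ 0 < ((μ i).rnDeriv (ν i) y).toReal) ?_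
    filter_upwards [Measure.rnDeriv_pos (hμν i),
      (hμν i).ae_le (Measure.rnDeriv_lt_top (μ i) (ν i))]
      with x hx₀ hx₁ using ENNReal.toReal_pos hx₀.ne' hx₁.ne
  filter_upwards [hac.ae_le hderiv, hpos] with x hx hx₀
  simp only [llr, hx, ENNReal.toReal_prod, Real.log_prod fun i _ ↦ (hx₀ i).ne']

lemma integral_llr_pi (hμν : ∀ i, μ i ≪ ν i) (hint : ∀ i, Integrable (llr (μ i) (ν i)) (μ i)) :
    ∫ x, llr (Measure.pi μ) (Measure.pi ν) x ∂Measure.pi μ =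
      ∑ i, ∫ x, llr (μ i) (ν i) x ∂μ i := by
  rw [integral_congr_ae (llr_pi hμν), integral_finsetSum _ fun i _ ↦ integrable_comp_eval (hint i)]
  exact Finset.sum_congr rfl fun i _ ↦ integral_comp_eval (hint i).aestronglyMeasurable

end ProductMeasure

section Gaussian

open scoped NNReal

variable {v : ℝ≥0}

lemma gaussianReal_absolutelyContinuous_gaussianReal (a b : ℝ) (hv : v ≠ 0) :
    gaussianReal a v ≪ gaussianReal b v :=
  (gaussianReal_absolutelyContinuous a hv).trans (gaussianReal_absolutelyContinuous' b hv)

lemma log_gaussianPDF_div_gaussianPDF (a b : ℝ) (hv : v ≠ 0) (x : ℝ) :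
    Real.log (gaussianPDF a v x / gaussianPDF b v x).toReal =
      (a - b) * (x - (a + b) / 2) / v := by
  have hv' : (v : ℝ) ≠ 0 := by exact_mod_cast hv
  have hconst : (√(2 * Real.pi * v))⁻¹ ≠ 0 := by positivity
  rw [ENNReal.toReal_div, toReal_gaussianPDF, toReal_gaussianPDF, gaussianPDFReal, gaussianPDFReal,
    mul_div_mul_left _ _ hconst, ← Real.exp_sub, Real.log_exp]
  field_simp
  ring

lemma llr_gaussianReal (a b : ℝ) (hv : v ≠ 0) :
    llr (gaussianReal a v) (gaussianReal b v) =ᵐ[gaussianReal a v]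
      fun x ↦ (a - b) * (x - (a + b) / 2) / v := by
  have hac := gaussianReal_absolutelyContinuous (v := v) (hv := hv)
  have hdiv := (gaussianReal_absolutelyContinuous_gaussianReal a b hv).ae_le
    (Measure.rnDeriv_eq_div (hac a) (hac b))
  filter_upwards [hdiv, (hac a).ae_le (rnDeriv_gaussianReal a v),
    (hac a).ae_le (rnDeriv_gaussianReal b v)] with x hx hxa hxb
  rw [llr, hx, hxa, hxb, log_gaussianPDF_div_gaussianPDF a b hv]

lemma integrable_id_gaussianReal (a : ℝ) (v : ℝ≥0) : Integrable (fun x ↦ x) (gaussianReal a v) :=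
  (memLp_id_gaussianReal 1).integrable le_rfl

lemma integrable_llr_gaussianReal (a b : ℝ) (hv : v ≠ 0) :
    Integrable (llr (gaussianReal a v) (gaussianReal b v)) (gaussianReal a v) :=
  (integrable_congr (llr_gaussianReal a b hv)).2 <|
    (((integrable_id_gaussianReal a v).sub (integrable_const _)).const_mul _).div_const _

lemma integral_llr_gaussianReal (a b : ℝ) (hv : v ≠ 0) :
    ∫ x, llr (gaussianReal a v) (gaussianReal b v) x ∂gaussianReal a v =
      (a - b) ^ 2 / (2 * v) := by
  rw [integral_congr_ae (llr_gaussianReal a b hv), integral_div, integral_const_mul,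
    integral_sub (integrable_id_gaussianReal a v) (integrable_const _), integral_id_gaussianReal,
    integral_const, probReal_univ, one_smul]
  ring

lemma integral_llr_pi_gaussianReal {ι : Type*} [Fintype ι] (a b : ι → ℝ) (hv : v ≠ 0) :
    ∫ x, llr (Measure.pi fun i ↦ gaussianReal (a i) v) (Measure.pi fun i ↦ gaussianReal (b i) v) x
      ∂(Measure.pi fun i ↦ gaussianReal (a i) v) = (∑ i, (a i - b i) ^ 2) / (2 * v) := by
  rw [integral_llr_pi (fun i ↦ gaussianReal_absolutelyContinuous_gaussianReal (a i) (b i) hv)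
    fun i ↦ integrable_llr_gaussianReal (a i) (b i) hv]
  simp_rw [integral_llr_gaussianReal _ _ hv, Finset.sum_div]

end Gaussian

section UnitFlow

variable {ι κ : Type*} [Fintype ι] [Fintype κ]

/-- The flows of total mass one from `p` to `q` over which `EMD` minimizes the transport cost. As
there, a flow is only required not to exceed its marginals; the constraint on its total mass turns
this into equality when `p` and `q` are probability vectors. -/
structure IsUnitFlow (p : ι → ℝ) (q : κ → ℝ) (F : ι → κ → ℝ) : Prop where
  nonneg : ∀ i j, 0 ≤ F i j
  sum_right_le : ∀ i, ∑ j, F i j ≤ p i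
  sum_left_le : ∀ j, ∑ i, F i j ≤ q j
  total : ∑ i, ∑ j, F i j = 1

namespace IsUnitFlow

variable {p : ι → ℝ} {q : κ → ℝ} {F : ι → κ → ℝ}

lemma mul (hp : p ∈ stdSimplex ℝ ι) (hq : q ∈ stdSimplex ℝ κ) :
    IsUnitFlow p q fun i j ↦ p i * q j where
  nonneg i j := mul_nonneg (hp.1 i) (hq.1 j)
  sum_right_le i := by rw [← Finset.mul_sum, hq.2, mul_one]
  sum_left_le j := by rw [← Finset.sum_mul, hp.2, one_mul]
  total := by simp_rw [← Finset.mul_sum, hq.2, mul_one, hp.2]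

lemma swap (hF : IsUnitFlow p q F) : IsUnitFlow q p fun j i ↦ F i j where
  nonneg j i := hF.nonneg i j
  sum_right_le := hF.sum_left_le
  sum_left_le := hF.sum_right_le
  total := Finset.sum_comm.trans hF.total

lemma sum_right (hF : IsUnitFlow p q F) (hp : ∑ i, p i = 1) (i : ι) : ∑ j, F i j = p i :=
  (Finset.sum_eq_sum_iff_of_le fun i _ ↦ hF.sum_right_le i).1 (hF.total.trans hp.symm) i
    (Finset.mem_univ i)

variable {E : Type*} [NormedAddCommGroup E] [NormedSpace ℝ E]

lemma sum_smul_sub_sum_smul (hF : IsUnitFlow p q F) (hp : ∑ i, p i = 1) (hq : ∑ j, q j = 1)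
    (a : ι → E) (b : κ → E) :
    ∑ i, p i • a i - ∑ j, q j • b j = ∑ i, ∑ j, F i j • (a i - b j) := by
  simp_rw [smul_sub, Finset.sum_sub_distrib]
  rw [Finset.sum_comm (f := fun i j ↦ F i j • b j)]
  simp_rw [← Finset.sum_smul, hF.sum_right hp, hF.swap.sum_right hq]

lemma norm_sum_smul_sub_sum_smul_le (hF : IsUnitFlow p q F) (hp : ∑ i, p i = 1)
    (hq : ∑ j, q j = 1) {a : ι → E} {b : κ → E} {c : ι → κ → ℝ}
    (hab : ∀ i j, ‖a i - b j‖ ≤ c i j) :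
    ‖∑ i, p i • a i - ∑ j, q j • b j‖ ≤ ∑ i, ∑ j, F i j * c i j := by
  rw [hF.sum_smul_sub_sum_smul hp hq]
  refine norm_sum_le_of_le _ fun i _ ↦ norm_sum_le_of_le _ fun j _ ↦ ?_
  rw [norm_smul, Real.norm_of_nonneg (hF.nonneg i j)]
  exact mul_le_mul_of_nonneg_left (hab i j) (hF.nonneg i j)

end IsUnitFlow

end UnitFlow

section EarthMoverDistance

variable {n : ℕ} {p q : Fin n → ℝ}

lemma EMD_eq_sInf_image (d : Fin n → Fin n → ℝ) (p q : Fin n → ℝ) :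
    EMD d p q = sInf ((fun F ↦ ∑ i, ∑ j, F i j * d i j) '' {F | IsUnitFlow p q F}) := by
  rw [EMD]
  congr 1
  ext c
  constructor
  · rintro ⟨F, h₀, hp, hq, h₁, rfl⟩
    exact ⟨F, ⟨h₀, hp, hq, h₁⟩, rfl⟩
  · rintro ⟨F, ⟨h₀, hp, hq, h₁⟩, rfl⟩
    exact ⟨F, h₀, hp, hq, h₁, rfl⟩

lemma norm_sum_smul_sub_sum_smul_le_mul_EMD {E : Type*} [NormedAddCommGroup E] [NormedSpace ℝ E]
    (hp : p ∈ stdSimplex ℝ (Fin n)) (hq : q ∈ stdSimplex ℝ (Fin n)) {d : Fin n → Fin n → ℝ}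
    {a : Fin n → E} {L : ℝ} (hL : 0 ≤ L) (ha : ∀ i j, ‖a i - a j‖ ≤ L * d i j) :
    ‖∑ i, p i • a i - ∑ i, q i • a i‖ ≤ L * EMD d p q := by
  rw [EMD_eq_sInf_image, ← smul_eq_mul, ← Real.sInf_smul_of_nonneg hL]
  refine le_csInf (Set.Nonempty.image _ ⟨_, .mul hp hq⟩).smul_set ?_
  rintro _ ⟨_, ⟨F, hF, rfl⟩, rfl⟩
  calc ‖∑ i, p i • a i - ∑ i, q i • a i‖
      ≤ ∑ i, ∑ j, F i j * (L * d i j) := hF.norm_sum_smul_sub_sum_smul_le hp.2 hq.2 ha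
    _ = L • ∑ i, ∑ j, F i j * d i j := by
      simp_rw [smul_eq_mul, Finset.mul_sum, mul_left_comm L]

end EarthMoverDistance

section HeatKernel

variable {T : ℝ}

lemma heatKernel_nonneg (T x : ℝ) : 0 ≤ heatKernel T x := by
  unfold heatKernel
  positivity

lemma heatKernel_zero_right (T : ℝ) : heatKernel T 0 = 1 / √(4 * Real.pi * T) := by
  simp [heatKernel]

lemma heatKernel_le_heatKernel_zero (hT : 0 ≤ T) (x : ℝ) : heatKernel T x ≤ heatKernel T 0 := by
  rw [heatKernel_zero_right, heatKernel]
  refine mul_le_of_le_one_right (by positivity) (Real.exp_le_one_iff.2 ?_)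
  exact div_nonpos_of_nonpos_of_nonneg (neg_nonpos.2 (sq_nonneg x)) (by positivity)

lemma hasDerivAt_heatKernel (T x : ℝ) :
    HasDerivAt (heatKernel T) (-x / (2 * T) * heatKernel T x) x := by
  have hexponent : HasDerivAt (fun x : ℝ ↦ -x ^ 2 / (4 * T)) (-(2 * x) / (4 * T)) x := by
    simpa using (hasDerivAt_pow 2 x).neg.div_const (4 * T)
  refine (hexponent.exp.const_mul (1 / √(4 * Real.pi * T))).congr_deriv ?_
  rw [heatKernel]
  ring

lemma abs_heatKernel_sub_le (hT : 0 ≤ T) {r x y : ℝ} (hx : |x| ≤ r) (hy : |y| ≤ r) :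
    |heatKernel T x - heatKernel T y| ≤ r / (2 * T) * heatKernel T 0 * |x - y| := by
  refine (convex_Icc (-r) r).norm_image_sub_le_of_norm_hasDerivWithin_le
    (fun z _ ↦ (hasDerivAt_heatKernel T z).hasDerivWithinAt) (fun z hz ↦ ?_)
    (abs_le.1 hy) (abs_le.1 hx)
  rw [Real.norm_eq_abs, abs_mul, abs_div, abs_neg, abs_of_nonneg (heatKernel_nonneg T z),
    abs_of_nonneg (by positivity : 0 ≤ 2 * T)]
  have hz' : |z| ≤ r := abs_le.2 hz
  have hr : 0 ≤ r := (abs_nonneg z).trans hz'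
  gcongr
  · exact heatKernel_nonneg T z
  · exact heatKernel_le_heatKernel_zero hT z

end HeatKernel

section HeatMatrix

variable {T : ℝ} {m n : ℕ}

lemma grid_mem_Icc (k : Fin n) : ((k : ℝ) + 1) / n ∈ Set.Icc (0 : ℝ) 1 := by
  refine ⟨by positivity, div_le_one_of_le₀ ?_ (by positivity)⟩
  exact_mod_cast k.isLt

lemma abs_grid_sub_grid (j k : Fin n) :
    |((j : ℝ) + 1) / n - ((k : ℝ) + 1) / n| = gridDist n j k := by
  rw [gridDist, ← sub_div, add_sub_add_right_eq_sub, abs_div, Nat.abs_cast]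

lemma abs_heatMatrix_sub_le (hT : 0 ≤ T) (i : Fin m) (j k : Fin n) :
    |heatMatrix T m n i j - heatMatrix T m n i k| ≤
      1 / (2 * T) * heatKernel T 0 * gridDist n j k := by
  have hdist (l : Fin n) : |((l : ℝ) + 1) / n - ((i : ℝ) + 1) / m| ≤ 1 :=
    Real.dist_le_of_mem_Icc_01 (grid_mem_Icc l) (grid_mem_Icc i)
  rw [← abs_grid_sub_grid]
  simpa only [heatMatrix, Matrix.of_apply, sub_sub_sub_cancel_right] using
    abs_heatKernel_sub_le hT (hdist j) (hdist k)

lemma abs_heatMatrix_mulVec_sub_le (hT : 0 ≤ T) {f f' : Fin n → ℝ}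
    (hf : f ∈ stdSimplex ℝ (Fin n)) (hf' : f' ∈ stdSimplex ℝ (Fin n)) (i : Fin m) :
    |(heatMatrix T m n).mulVec f i - (heatMatrix T m n).mulVec f' i| ≤
      1 / (2 * T) * heatKernel T 0 * EMD (gridDist n) f f' := by
  have hL : 0 ≤ 1 / (2 * T) * heatKernel T 0 :=
    mul_nonneg (by positivity) (heatKernel_nonneg T 0)
  simp_rw [Matrix.mulVec, dotProduct_comm _ f, dotProduct_comm _ f']
  exact norm_sum_smul_sub_sum_smul_le_mul_EMD (a := heatMatrix T m n i) hf hf' hL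
    (abs_heatMatrix_sub_le hT i)

lemma sq_l2norm (x : Fin m → ℝ) : l2norm x ^ 2 = ∑ i, x i ^ 2 :=
  Real.sq_sqrt (Finset.sum_nonneg fun i _ ↦ sq_nonneg (x i))

lemma sq_l2norm_le_of_abs_le {x : Fin m → ℝ} {c : ℝ} (hx : ∀ i, |x i| ≤ c) :
    l2norm x ^ 2 ≤ m * c ^ 2 := by
  rw [sq_l2norm]
  simpa using Finset.sum_le_card_nsmul Finset.univ (fun i ↦ x i ^ 2) (c ^ 2)
    fun i _ ↦ sq_le_sq' (abs_le.1 (hx i)).1 (abs_le.1 (hx i)).2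

lemma sq_l2norm_heatMatrix_mulVec_sub_le (hT : 0 < T) {f f' : Fin n → ℝ}
    (hf : f ∈ stdSimplex ℝ (Fin n)) (hf' : f' ∈ stdSimplex ℝ (Fin n)) :
    l2norm (fun i ↦ (heatMatrix T m n).mulVec f i - (heatMatrix T m n).mulVec f' i) ^ 2 ≤
      m / (16 * Real.pi * T ^ 3) * EMD (gridDist n) f f' ^ 2 := by
  refine (sq_l2norm_le_of_abs_le (abs_heatMatrix_mulVec_sub_le hT.le hf hf')).trans_eq ?_
  rw [heatKernel_zero_right, mul_pow, mul_pow, div_pow _ √_, Real.sq_sqrt (by positivity)]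
  field_simp
  ring

end HeatMatrix

lemma KLdiv_measDist {T σ : ℝ} (hσ : σ ≠ 0) {m n : ℕ} (f f' : Fin n → ℝ) :
    KLdiv (measDist T σ m n f) (measDist T σ m n f') =
      l2norm (fun i ↦ (heatMatrix T m n).mulVec f i - (heatMatrix T m n).mulVec f' i) ^ 2 /
        (2 * σ ^ 2) := by
  have hvar : (⟨σ ^ 2, sq_nonneg σ⟩ : NNReal) ≠ 0 :=
    fun h ↦ pow_ne_zero 2 hσ (congrArg NNReal.toReal h)
  rw [sq_l2norm]
  exact integral_llr_pi_gaussianReal _ _ hvar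

lemma mem_stdSimplex_of_l1norm_eq_one {n : ℕ} {f : Fin n → ℝ} (hf : ∀ i, 0 ≤ f i)
    (hf₁ : l1norm f = 1) : f ∈ stdSimplex ℝ (Fin n) :=
  ⟨hf, by simpa only [l1norm, abs_of_nonneg (hf _)] using hf₁⟩

theorem kl_divergence_heat_measurements_general {T σ : ℝ} {m n : ℕ} (hT : 0 < T) (hσ : σ ≠ 0)
    {f₀ f₀' : Fin n → ℝ} (hf₀ : f₀ ∈ stdSimplex ℝ (Fin n)) (hf₀' : f₀' ∈ stdSimplex ℝ (Fin n)) :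
    KLdiv (measDist T σ m n f₀) (measDist T σ m n f₀') =
      l2norm (fun i ↦ (heatMatrix T m n).mulVec f₀ i - (heatMatrix T m n).mulVec f₀' i) ^ 2 /
        (2 * σ ^ 2) ∧
    l2norm (fun i ↦ (heatMatrix T m n).mulVec f₀ i - (heatMatrix T m n).mulVec f₀' i) ^ 2 /
        (2 * σ ^ 2) ≤
      1 / (32 * Real.pi) * (m / (T ^ 3 * σ ^ 2)) * EMD (gridDist n) f₀ f₀' ^ 2 := by
  refine ⟨KLdiv_measDist hσ f₀ f₀', ?_⟩
  calc l2norm (fun i ↦ (heatMatrix T m n).mulVec f₀ i - (heatMatrix T m n).mulVec f₀' i) ^ 2 /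
        (2 * σ ^ 2)
      ≤ m / (16 * Real.pi * T ^ 3) * EMD (gridDist n) f₀ f₀' ^ 2 / (2 * σ ^ 2) := by
        gcongr
        exact sq_l2norm_heatMatrix_mulVec_sub_le hT hf₀ hf₀'
    _ = 1 / (32 * Real.pi) * (m / (T ^ 3 * σ ^ 2)) * EMD (gridDist n) f₀ f₀' ^ 2 := by
        field_simp
        ring

/-- There is a universal constant `C > 0` such that whenever `nT ≥ 1`,
for all unit-mass source vectors `f₀, f₀'`, the Kullback–Leibler divergence between the
Gaussian measurement distributions satisfies
`D(P_{f₀} ‖ P_{f₀'}) = ‖A f₀ − A f₀'‖₂²/(2σ²) ≤ C (m/(T³σ²)) EMD(f₀, f₀')²`. -/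
theorem kl_divergence_heat_measurements :
    ∃ C : ℝ, 0 < C ∧ ∀ (T σ : ℝ) (m n : ℕ), 0 < T → 0 < σ → 1 ≤ m → 1 ≤ n →
      1 ≤ (n : ℝ) * T →
      ∀ f₀ f₀' : Fin n → ℝ,
        (∀ i, f₀ i ∈ Set.Icc (0 : ℝ) 1) → (∀ i, f₀' i ∈ Set.Icc (0 : ℝ) 1) →
        l1norm f₀ = 1 → l1norm f₀' = 1 →
        KLdiv (measDist T σ m n f₀) (measDist T σ m n f₀') =
          (l2norm (fun i => (heatMatrix T m n).mulVec f₀ i -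
            (heatMatrix T m n).mulVec f₀' i)) ^ 2 / (2 * σ ^ 2) ∧
        (l2norm (fun i => (heatMatrix T m n).mulVec f₀ i -
            (heatMatrix T m n).mulVec f₀' i)) ^ 2 / (2 * σ ^ 2) ≤
          C * ((m : ℝ) / (T ^ 3 * σ ^ 2)) * (EMD (gridDist n) f₀ f₀') ^ 2 := by
  exact ⟨1 / (32 * Real.pi), by positivity, fun T σ m n hT hσ _ _ _ f₀ f₀' hf₀ hf₀' hf₀₁ hf₀₁' ↦
    kl_divergence_heat_measurements_general hT hσ.ne'
      (mem_stdSimplex_of_l1norm_eq_one (fun i ↦ (hf₀ i).1) hf₀₁)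
      (mem_stdSimplex_of_l1norm_eq_one (fun i ↦ (hf₀' i).1) hf₀₁')⟩
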